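/- Let a ∈ ℝ and let g : ℂ → ℂ be analytic on an open set containing the closed vertical strip {z ∈ ℂ : a ≤ Re z ≤ a+1}. Suppose that the integrals over the horizontal segments vanish in the limit: lim_{T→+∞} ∫_{s=0}^{1} g(a+s+iT)·e^{−cos(2π(a+s+iT))} ds = 0 and lim_{T→+∞} ∫_{s=0}^{1} g(a+s−iT)·e^{−cos(2π(a+s−iT))} ds = 0. Then lim_{T→+∞} ∫_{−T}^{T} ( g(a+1+iy) − g(a+iy) )·e^{−cos(2π(a+iy))} dy = 0; equivalently, the principal-value integral of (g(x+1) − g(x))·e^{−cos(2πx)} along the vertical line Re x = a vanishes. -/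

import Mathlib

open Filter

/-! Multiplication by the periodic weight turns the differences of `g` into differences of one
holomorphic function between the two sides of a vertical strip. By Cauchy's theorem on a rectangle
of height `2T`, the integral of the latter is, up to a factor `I`, the difference of the integrals
over the two horizontal edges. -/

section VerticalStrip

open Complex Set

lemma continuous_vertical_line {X : Type*} [TopologicalSpace X] {f : ℂ → X} {s : Set ℝ}
    (hf : ContinuousOn f (re ⁻¹' s)) {x : ℝ} (hx : x ∈ s) :
    Continuous fun y : ℝ => f (x + I * y) :=
  hf.comp_continuous (by fun_prop) fun y => by simpa using hx

variable {E : Type*} [NormedAddCommGroup E] [NormedSpace ℂ E] {f : ℂ → E} {a b : ℝ}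

lemma continuousOn_closed_strip_of_diffContOnCl (hab : a < b)
    (hf : DiffContOnCl ℂ f (re ⁻¹' Ioo a b)) :
    ContinuousOn f (re ⁻¹' Icc a b) := by
  simpa only [closure_preimage_re, closure_Ioo hab.ne] using hf.continuousOn

lemma integral_sub_vertical_eq_I_smul_sub_horizontal (hab : a < b)
    (hf : DiffContOnCl ℂ f (re ⁻¹' Ioo a b)) (c d : ℝ) :
    ∫ y in c..d, (f (b + I * y) - f (a + I * y)) =
      I • ((∫ x in a..b, f (x + I * c)) - ∫ x in a..b, f (x + I * d)) := by
  have hcont := continuousOn_closed_strip_of_diffContOnCl hab hf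
  have cauchy : (∫ x in a..b, f (x + I * c)) - (∫ x in a..b, f (x + I * d)) +
      I • (∫ y in c..d, f (b + I * y)) - I • ∫ y in c..d, f (a + I * y) = 0 := by
    simpa only [mul_comm I] using
      integral_boundary_rect_eq_zero_of_continuousOn_of_differentiableOn f ⟨a, c⟩ ⟨b, d⟩
        (hcont.mono fun z hz => by simpa only [uIcc_of_le hab.le] using hz.1)
        (hf.differentiableOn.mono fun z hz => by
          simpa only [min_eq_left hab.le, max_eq_right hab.le] using hz.1)
  rw [intervalIntegral.integral_sub
    ((continuous_vertical_line hcont (right_mem_Icc.2 hab.le)).intervalIntegrable _ _)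
    ((continuous_vertical_line hcont (left_mem_Icc.2 hab.le)).intervalIntegrable _ _)]
  rw [add_sub_assoc, ← smul_sub] at cauchy
  rw [eq_neg_of_add_eq_zero_left cauchy, smul_neg, smul_smul, I_mul_I, neg_one_smul, neg_neg]

lemma tendsto_integral_sub_vertical_nhds_zero {h : ℝ} (hh : 0 < h)
    (hf : DiffContOnCl ℂ f (re ⁻¹' Ioo a (a + h)))
    (htop : Tendsto (fun T : ℝ => ∫ s in (0 : ℝ)..h, f (a + s + I * T)) atTop (nhds 0))
    (hbot : Tendsto (fun T : ℝ => ∫ s in (0 : ℝ)..h, f (a + s - I * T)) atTop (nhds 0)) :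
    Tendsto (fun T : ℝ => ∫ y in (-T)..T, (f (a + h + I * y) - f (a + I * y)))
      atTop (nhds 0) := by
  have translate (v : ℂ) : ∫ x in a..(a + h), f (x + v) = ∫ s in (0 : ℝ)..h, f (a + s + v) := by
    simpa using (intervalIntegral.integral_comp_add_left (a := 0) (b := h)
      (fun x : ℝ => f (x + v)) a).symm
  have shift (T : ℝ) : ∫ y in (-T)..T, (f (a + h + I * y) - f (a + I * y)) =
      I • ((∫ s in (0 : ℝ)..h, f (a + s - I * T)) - ∫ s in (0 : ℝ)..h, f (a + s + I * T)) := by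
    simpa only [sub_eq_add_neg _ (I * (T : ℂ)), translate, ofReal_add, ofReal_neg, mul_neg] using
      integral_sub_vertical_eq_I_smul_sub_horizontal (lt_add_of_pos_right a hh) hf (-T) T
  simpa only [shift, sub_zero, smul_zero] using (hbot.sub htop).const_smul I

end VerticalStrip

section ResidueMap

open Complex Set

theorem residue_vanishes_on_differences_general {A : Type*} [NormedRing A] [NormedAlgebra ℂ A]
    {a h : ℝ} (hh : 0 < h) {g w : ℂ → A} (hw : Function.Periodic w h)
    (hgw : DiffContOnCl ℂ (fun z => g z * w z) (re ⁻¹' Ioo a (a + h)))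
    (htop : Tendsto (fun T : ℝ => ∫ s in (0 : ℝ)..h, g (a + s + I * T) * w (a + s + I * T))
      atTop (nhds 0))
    (hbot : Tendsto (fun T : ℝ => ∫ s in (0 : ℝ)..h, g (a + s - I * T) * w (a + s - I * T))
      atTop (nhds 0)) :
    Tendsto (fun T : ℝ => ∫ y in (-T)..T, (g (a + h + I * y) - g (a + I * y)) * w (a + I * y))
      atTop (nhds 0) := by
  have periodic (y : ℝ) : w (a + h + I * y) = w (a + I * y) := by
    rw [add_right_comm, hw]
  simpa only [periodic, ← sub_mul] using tendsto_integral_sub_vertical_nhds_zero hh hgw htop hbot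

/-- The weight `e^{-cos(2πz)}` of the residue map for the forward difference operator. -/
noncomputable def residueWeight (z : ℂ) : ℂ :=
  exp (-cos (2 * Real.pi * z))

lemma differentiable_residueWeight : Differentiable ℂ residueWeight := by
  unfold residueWeight
  fun_prop

lemma periodic_residueWeight : Function.Periodic residueWeight 1 := fun z => by
  simp only [residueWeight, mul_add, mul_one, cos_add_two_pi]

lemma diffContOnCl_mul_residueWeight {a b : ℝ} {g : ℂ → ℂ}
    (hg : DifferentiableOn ℂ g (re ⁻¹' Icc a b)) :
    DiffContOnCl ℂ (fun z => g z * residueWeight z) (re ⁻¹' Ioo a b) := by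
  refine DifferentiableOn.diffContOnCl
    ((hg.mul differentiable_residueWeight.differentiableOn).mono ?_)
  rw [closure_preimage_re]
  exact preimage_mono (closure_minimal Ioo_subset_Icc_self isClosed_Icc)

end ResidueMap

/-- Lemma 2.11 (contour-shift identity): the Barnes-type residue map vanishes on
differences `g(x+1) - g(x)`. -/
theorem residue_vanishes_on_differences
    (a : ℝ) (U : Set ℂ) (hU : IsOpen U)
    (hstrip : {z : ℂ | a ≤ z.re ∧ z.re ≤ a + 1} ⊆ U)
    (g : ℂ → ℂ) (hg : DifferentiableOn ℂ g U)
    (htop : Tendsto (fun T : ℝ => ∫ s in (0:ℝ)..1,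
        g ((a : ℂ) + s + Complex.I * T) *
          Complex.exp (-Complex.cos (2 * Real.pi * ((a : ℂ) + s + Complex.I * T))))
      atTop (nhds 0))
    (hbot : Tendsto (fun T : ℝ => ∫ s in (0:ℝ)..1,
        g ((a : ℂ) + s - Complex.I * T) *
          Complex.exp (-Complex.cos (2 * Real.pi * ((a : ℂ) + s - Complex.I * T))))
      atTop (nhds 0)) :
    Tendsto (fun T : ℝ => ∫ y in (-T)..T,
        (g ((a : ℂ) + 1 + Complex.I * y) - g ((a : ℂ) + Complex.I * y)) *
          Complex.exp (-Complex.cos (2 * Real.pi * ((a : ℂ) + Complex.I * y))))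
      atTop (nhds 0) := by
  have hper : Function.Periodic residueWeight (1 : ℝ) := by
    simpa only [Complex.ofReal_one] using periodic_residueWeight
  simpa only [residueWeight, Complex.ofReal_one] using
    residue_vanishes_on_differences_general one_pos hper
      (diffContOnCl_mul_residueWeight (hg.mono hstrip)) htop hbot
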